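/- arXiv:2208.05405 — 2 statements merged into one kernel-verified Lean document; each statement's English description precedes it below -/
import Mathlib

section
/- Let τ > 0 be real, let q = e^{−π²/τ}, and let y = (η_1, …, η_n) ∈ ℝ^n with |η_i| ≤ 1/2 for all i. Then Σ_{x ∈ ℤ^n} e^{−τ‖x − y‖²} / Σ_{x ∈ ℤ^n} e^{−τ‖x‖²} = ∏_{i=1}^n ∏_{k=1}^∞ (1 − 2 q^{2k−1}(1 − cos(2π η_i))/(1 + q^{2k−1})²). -/
/-!
By Poisson summation, a Gaussian sum over `ℤ` shifted by `η` is a constant independent of `η` times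
the theta series `∑ q ^ n² z ^ n` at `z = exp (2πiη)`. The Jacobi triple product
`∏ (1 - q ^ 2k) (1 + q ^ (2k-1) z) (1 + q ^ (2k-1) z⁻¹)` factors this series, and in the quotient by
the value at `z = 1` everything that does not depend on `z` cancels. The sum over `ℤⁿ` is the
product of `n` such sums. The triple product itself is the limit, by dominated convergence, of a
symmetric form of the `q`-binomial theorem.
-/

open Filter Finset Topology

section QBinomial

/-- The `q`-Pochhammer symbol `(q; q)_n = (1 - q) (1 - q²) ⋯ (1 - qⁿ)`. -/
def qPochhammer {R : Type*} [CommRing R] (q : R) (n : ℕ) : R :=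
  ∏ k ∈ range n, (1 - q ^ (k + 1))

/-- The Gaussian binomial coefficient `[n, k]_q`, defined by the `q`-Pascal rule so that it makes
sense over every semiring. -/
def gaussBinom {R : Type*} [Semiring R] (q : R) : ℕ → ℕ → R
  | _, 0 => 1
  | 0, _ + 1 => 0
  | n + 1, k + 1 => gaussBinom q n k + q ^ (k + 1) * gaussBinom q n (k + 1)

lemma qPochhammer_zero {R : Type*} [CommRing R] (q : R) : qPochhammer q 0 = 1 :=
  prod_range_zero _

lemma qPochhammer_succ {R : Type*} [CommRing R] (q : R) (n : ℕ) :
    qPochhammer q (n + 1) = qPochhammer q n * (1 - q ^ (n + 1)) :=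
  prod_range_succ _ _

lemma gaussBinom_zero_right {R : Type*} [Semiring R] (q : R) (n : ℕ) : gaussBinom q n 0 = 1 := by
  cases n <;> rfl

lemma gaussBinom_succ_succ {R : Type*} [Semiring R] (q : R) (n k : ℕ) :
    gaussBinom q (n + 1) (k + 1) = gaussBinom q n k + q ^ (k + 1) * gaussBinom q n (k + 1) :=
  rfl

lemma gaussBinom_eq_zero_of_lt {R : Type*} [Semiring R] (q : R) {n k : ℕ} (h : n < k) :
    gaussBinom q n k = 0 := by
  induction n generalizing k with
  | zero => obtain ⟨k, rfl⟩ := Nat.exists_eq_add_one.2 h; rfl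
  | succ n ih =>
    obtain ⟨k, rfl⟩ := Nat.exists_eq_add_one.2 (Nat.zero_lt_of_lt h)
    rw [gaussBinom_succ_succ, ih (by lia), ih (by lia), mul_zero, add_zero]

lemma gaussBinom_self {R : Type*} [Semiring R] (q : R) (n : ℕ) : gaussBinom q n n = 1 := by
  induction n with
  | zero => rfl
  | succ n ih =>
    rw [gaussBinom_succ_succ, ih, gaussBinom_eq_zero_of_lt q n.lt_succ_self, mul_zero, add_zero]

lemma gaussBinom_add_mul_qPochhammer {R : Type*} [CommRing R] (q : R) (a b : ℕ) :
    gaussBinom q (a + b) a * (qPochhammer q a * qPochhammer q b) = qPochhammer q (a + b) := by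
  induction a generalizing b with
  | zero => simp [gaussBinom_zero_right, qPochhammer_zero]
  | succ a iha =>
    induction b with
    | zero => simp [gaussBinom_self, qPochhammer_zero]
    | succ b ihb =>
      have pascal := gaussBinom_succ_succ q (a + 1 + b) a
      have left := iha (b + 1)
      rw [← add_assoc, add_right_comm] at left
      rw [← add_assoc, pascal, qPochhammer_succ q (a + 1 + b), qPochhammer_succ q b]
      rw [qPochhammer_succ] at ihb left ⊢
      linear_combination (1 - q ^ (a + 1)) * left + q ^ (a + 1) * (1 - q ^ (b + 1)) * ihb

/-- The **`q`-binomial theorem** of Rothe. -/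
theorem prod_range_one_add_pow_mul {R : Type*} [CommSemiring R] (q x : R) (n : ℕ) :
    ∏ k ∈ range n, (1 + q ^ k * x) =
      ∑ k ∈ range (n + 1), gaussBinom q n k * q ^ k.choose 2 * x ^ k := by
  induction n generalizing x with
  | zero => simp [gaussBinom_zero_right]
  | succ n ih =>
    have shift : ∏ k ∈ range n, (1 + q ^ (k + 1) * x) = ∏ k ∈ range n, (1 + q ^ k * (q * x)) :=
      prod_congr rfl fun k _ ↦ by ring
    have top : gaussBinom q n (n + 1) = 0 := gaussBinom_eq_zero_of_lt q n.lt_succ_self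
    have tail : ∑ k ∈ range (n + 1), gaussBinom q n k * q ^ k.choose 2 * (q * x) ^ k =
        1 + ∑ k ∈ range (n + 1),
          gaussBinom q n (k + 1) * q ^ (k + 1).choose 2 * (q * x) ^ (k + 1) := by
      rw [sum_range_succ', sum_range_succ _ n, top]
      simp [gaussBinom_zero_right, add_comm]
    rw [prod_range_succ', shift, ih, pow_zero, one_mul, mul_add, mul_one]
    nth_rw 1 [tail]
    rw [add_assoc, sum_mul, ← sum_add_distrib, sum_range_succ' _ (n + 1), add_comm]
    congr 1
    · refine sum_congr rfl fun k _ ↦ ?_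
      rw [gaussBinom_succ_succ, Nat.choose_succ_succ' k 1, Nat.choose_one_right]
      ring
    · simp [gaussBinom_zero_right]

end QBinomial

section FiniteTripleProduct

lemma prod_range_pow_two_mul_add_one {M : Type*} [CommMonoid M] (q : M) (n : ℕ) :
    ∏ k ∈ range n, q ^ (2 * k + 1) = q ^ n ^ 2 := by
  induction n with
  | zero => simp
  | succ n ih => rw [prod_range_succ, ih, ← pow_add]; congr 1; ring

lemma two_mul_choose_two_add_self (n : ℕ) : 2 * n.choose 2 + n = n ^ 2 := by
  induction n with
  | zero => rfl
  | succ n ih => rw [Nat.choose_succ_succ' n 1, Nat.choose_one_right]; linarith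

variable {K : Type*} [Field K] {q z : K}

-- For `k < N` the factor `1 + q ^ (2 * k + 1) / z` is `1 + q ^ (-(2 * k + 1)) z` up to a monomial,
-- so that the `2 * N` factors become those of the `q`-binomial theorem for `q ^ 2`.
lemma prod_range_one_add_pow_mul_inv (hq : q ≠ 0) (hz : z ≠ 0) (N : ℕ) :
    z ^ N * ∏ k ∈ range N, ((1 + q ^ (2 * k + 1) * z) * (1 + q ^ (2 * k + 1) * z⁻¹)) =
      q ^ N ^ 2 * ∏ k ∈ range (2 * N), (1 + (q ^ 2) ^ k * (q * z / q ^ (2 * N))) := by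
  have lower : ∏ k ∈ range N, (1 + (q ^ 2) ^ k * (q * z / q ^ (2 * N))) =
      ∏ k ∈ range N, z / q ^ (2 * k + 1) * (1 + q ^ (2 * k + 1) * z⁻¹) := by
    rw [← prod_range_reflect]
    refine prod_congr rfl fun k hk ↦ ?_
    obtain ⟨m, rfl⟩ := Nat.exists_eq_add_of_lt (mem_range.1 hk)
    rw [show k + m + 1 - 1 - k = m by lia]
    field_simp
    ring
  have upper (k : ℕ) :
      1 + (q ^ 2) ^ (N + k) * (q * z / q ^ (2 * N)) = 1 + q ^ (2 * k + 1) * z := by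
    field_simp
    ring
  rw [two_mul N, prod_range_add, ← two_mul, lower, prod_congr rfl fun k _ ↦ upper k]
  simp only [prod_mul_distrib, prod_div_distrib, prod_const, card_range,
    prod_range_pow_two_mul_add_one]
  rw [mul_assoc, ← mul_assoc (q ^ N ^ 2), mul_div_cancel₀ _ (pow_ne_zero _ hq),
    mul_comm (∏ _ ∈ _, _)]

lemma prod_range_eq_sum_gaussBinom (hq : q ≠ 0) (hz : z ≠ 0) (N : ℕ) :
    ∏ k ∈ range N, ((1 + q ^ (2 * k + 1) * z) * (1 + q ^ (2 * k + 1) * z⁻¹)) =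
      ∑ n ∈ Icc (-N : ℤ) N, gaussBinom (q ^ 2) (2 * N) (N + n).toNat * (q ^ n ^ 2 * z ^ n) := by
  have monomial (n : ℕ) : q ^ N ^ 2 * ((q ^ 2) ^ n.choose 2 * (q * z / q ^ (2 * N)) ^ n) =
      z ^ N * (q ^ ((n : ℤ) - N) ^ 2 * z ^ ((n : ℤ) - N)) := by
    have hn : ((n : ℤ) - N) ^ 2 =
        ((2 * n.choose 2 + n : ℕ) : ℤ) + (N ^ 2 : ℕ) - (2 * N * n : ℕ) := by
      rw [two_mul_choose_two_add_self]; push_cast; ring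
    rw [hn, zpow_sub₀ hq, zpow_add₀ hq, zpow_sub₀ hz]
    simp only [zpow_natCast, div_pow, ← pow_mul]
    field_simp
    ring
  refine mul_left_cancel₀ (pow_ne_zero N hz) ?_
  rw [prod_range_one_add_pow_mul_inv hq hz, prod_range_one_add_pow_mul, mul_sum, mul_sum]
  refine sum_nbij' (fun n : ℕ ↦ (n : ℤ) - N) (fun n ↦ (N + n).toNat) (fun n hn ↦ ?_)
    (fun n hn ↦ ?_) (fun n _ ↦ ?_) (fun n hn ↦ ?_) fun n _ ↦ ?_
  · grind
  · grind
  · simp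
  · grind
  · rw [add_sub_cancel, Int.toNat_natCast, mul_left_comm (z ^ N), ← monomial]
    ring

end FiniteTripleProduct

section TripleProduct

variable {𝕜 : Type*} [NormedField 𝕜] {q z : 𝕜}

lemma norm_sq_lt_one (hq : ‖q‖ < 1) : ‖q ^ 2‖ < 1 := by
  simpa only [norm_pow] using pow_lt_one₀ (norm_nonneg q) hq two_ne_zero

lemma one_sub_pow_succ_ne_zero (hq : ‖q‖ < 1) (k : ℕ) : 1 - q ^ (k + 1) ≠ 0 := by
  refine sub_ne_zero.2 fun h ↦ (pow_lt_one₀ (norm_nonneg q) hq k.succ_ne_zero).ne ?_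
  rw [← norm_pow, ← h, norm_one]

lemma one_add_pow_odd_ne_zero (hq : ‖q‖ < 1) (k : ℕ) : 1 + q ^ (2 * k + 1) ≠ 0 := by
  simpa only [sub_neg_eq_add, (odd_two_mul_add_one k).neg_pow] using
    one_sub_pow_succ_ne_zero (q := -q) (by rwa [norm_neg]) (2 * k)

lemma qPochhammer_ne_zero (hq : ‖q‖ < 1) (n : ℕ) : qPochhammer q n ≠ 0 :=
  prod_ne_zero_iff.2 fun k _ ↦ one_sub_pow_succ_ne_zero hq k

lemma gaussBinom_add_eq_div (hq : ‖q‖ < 1) (a b : ℕ) :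
    gaussBinom q (a + b) a = qPochhammer q (a + b) / (qPochhammer q a * qPochhammer q b) :=
  eq_div_of_mul_eq (mul_ne_zero (qPochhammer_ne_zero hq a) (qPochhammer_ne_zero hq b))
    (gaussBinom_add_mul_qPochhammer q a b)

lemma summable_norm_neg_pow_succ (hq : ‖q‖ < 1) : Summable fun k : ℕ ↦ ‖-q ^ (k + 1)‖ := by
  simpa only [norm_neg, norm_pow] using
    (summable_nat_add_iff 1).2 (summable_geometric_of_lt_one (norm_nonneg q) hq)

lemma summable_norm_pow_odd_mul (hq : ‖q‖ < 1) (z : 𝕜) :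
    Summable fun k : ℕ ↦ ‖q ^ (2 * k + 1) * z‖ := by
  simp only [norm_mul, norm_pow]
  exact ((summable_geometric_of_lt_one (norm_nonneg q) hq).comp_injective
    (i := fun k : ℕ ↦ 2 * k + 1) fun a b h ↦ by simpa using h).mul_right _

lemma summable_zpow_sq_mul_zpow {r t : ℝ} (hr : 0 < r) (hr' : r < 1) (ht : 0 < t) :
    Summable fun n : ℤ ↦ r ^ n ^ 2 * t ^ n := by
  set w : ℂ := ⟨0, -Real.log t / (2 * Real.pi)⟩
  set τ : ℂ := ⟨0, -Real.log r / Real.pi⟩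
  have hτ : 0 < τ.im := div_pos (neg_pos.2 (Real.log_neg hr hr')) Real.pi_pos
  refine ((summable_jacobiTheta₂_term_iff w τ).2 hτ).norm.congr fun n ↦ ?_
  rw [norm_jacobiTheta₂_term, ← Real.rpow_intCast, ← Real.rpow_intCast, Real.rpow_def_of_pos hr,
    Real.rpow_def_of_pos ht, ← Real.exp_add]
  congr 1
  simp only [w, τ]
  push_cast
  field_simp
  ring

variable [CompleteSpace 𝕜]

lemma tendsto_qPochhammer (hq : ‖q‖ < 1) :
    Tendsto (qPochhammer q) atTop (𝓝 (∏' k : ℕ, (1 - q ^ (k + 1)))) := by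
  change Tendsto (fun n ↦ ∏ k ∈ range n, (1 - q ^ (k + 1))) atTop _
  simpa only [sub_eq_add_neg] using
    (multipliable_one_add_of_summable (f := fun k ↦ -q ^ (k + 1))
      (summable_norm_neg_pow_succ hq)).tendsto_prod_tprod_nat

lemma tprod_one_sub_pow_succ_ne_zero (hq : ‖q‖ < 1) : ∏' k : ℕ, (1 - q ^ (k + 1)) ≠ 0 := by
  simpa only [sub_eq_add_neg] using tprod_one_add_ne_zero_of_summable
    (f := fun k ↦ -q ^ (k + 1))
    (fun k ↦ by simpa only [sub_eq_add_neg] using one_sub_pow_succ_ne_zero hq k)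
    (summable_norm_neg_pow_succ hq)

lemma tendsto_gaussBinom_add {ι : Type*} {l : Filter ι} {a b : ι → ℕ} (hq : ‖q‖ < 1)
    (ha : Tendsto a l atTop) (hb : Tendsto b l atTop) :
    Tendsto (fun i ↦ gaussBinom q (a i + b i) (a i)) l
      (𝓝 (∏' k : ℕ, (1 - q ^ (k + 1)))⁻¹) := by
  have hne := tprod_one_sub_pow_succ_ne_zero hq
  have hlim := tendsto_qPochhammer hq
  have hadd : Tendsto (fun i ↦ a i + b i) l atTop :=
    tendsto_atTop_mono (fun i ↦ Nat.le_add_right _ _) ha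
  simp only [gaussBinom_add_eq_div hq]
  rw [← div_mul_cancel_left₀ hne]
  exact (hlim.comp hadd).div ((hlim.comp ha).mul (hlim.comp hb)) (mul_ne_zero hne hne)

lemma exists_norm_gaussBinom_le (hq : ‖q‖ < 1) : ∃ C, ∀ n k, ‖gaussBinom q n k‖ ≤ C := by
  have hlim := tendsto_qPochhammer hq
  obtain ⟨A, hA⟩ := (Metric.isBounded_range_of_tendsto _ hlim).exists_norm_le
  obtain ⟨B, hB⟩ := (Metric.isBounded_range_of_tendsto _
    (hlim.inv₀ (tprod_one_sub_pow_succ_ne_zero hq))).exists_norm_le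
  rw [Set.forall_mem_range] at hA hB
  have hA0 : 0 ≤ A := (norm_nonneg _).trans (hA 0)
  have hB0 : 0 ≤ B := (norm_nonneg _).trans (hB 0)
  refine ⟨A * (B * B), fun n k ↦ ?_⟩
  rcases lt_or_ge n k with h | h
  · rw [gaussBinom_eq_zero_of_lt q h, norm_zero]
    positivity
  · obtain ⟨m, rfl⟩ := Nat.exists_eq_add_of_le h
    rw [gaussBinom_add_eq_div hq, div_eq_mul_inv, mul_inv, norm_mul, norm_mul]
    gcongr
    exacts [hA _, hB _, hB _]

lemma multipliable_one_add_pow_odd_mul (hq : ‖q‖ < 1) (z : 𝕜) :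
    Multipliable fun k : ℕ ↦ 1 + q ^ (2 * k + 1) * z :=
  multipliable_one_add_of_summable (summable_norm_pow_odd_mul hq z)

lemma multipliable_one_add_pow_odd_mul_mul_inv (hq : ‖q‖ < 1) (z : 𝕜) :
    Multipliable fun k : ℕ ↦ (1 + q ^ (2 * k + 1) * z) * (1 + q ^ (2 * k + 1) * z⁻¹) :=
  (multipliable_one_add_pow_odd_mul hq z).mul (multipliable_one_add_pow_odd_mul hq z⁻¹)

lemma tendsto_sum_gaussBinom (hq : q ≠ 0) (hq' : ‖q‖ < 1) (hz : z ≠ 0) :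
    Tendsto (fun N : ℕ ↦ ∑ n ∈ Icc (-N : ℤ) N,
        gaussBinom (q ^ 2) (2 * N) (N + n).toNat * (q ^ n ^ 2 * z ^ n)) atTop
      (𝓝 (∑' n : ℤ, (∏' k : ℕ, (1 - (q ^ 2) ^ (k + 1)))⁻¹ * (q ^ n ^ 2 * z ^ n))) := by
  have hp := norm_sq_lt_one hq'
  obtain ⟨C, hC⟩ := exists_norm_gaussBinom_le hp
  have hsum : Summable fun n : ℤ ↦ ‖q ^ n ^ 2 * z ^ n‖ := by
    simpa only [norm_mul, norm_zpow] using
      summable_zpow_sq_mul_zpow (norm_pos_iff.2 hq) hq' (norm_pos_iff.2 hz)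
  simp_rw [sum_eq_tsum_indicator _ (Icc _ _)]
  refine tendsto_tsum_of_dominated_convergence (hsum.mul_left C) (fun n ↦ ?_)
    (Eventually.of_forall fun N n ↦ ?_)
  · have hlarge : ∀ᶠ N : ℕ in atTop, n.natAbs ≤ N := eventually_ge_atTop _
    have ha : Tendsto (fun N : ℕ ↦ (N + n).toNat) atTop atTop :=
      tendsto_atTop.2 fun b ↦ (eventually_ge_atTop (b + n.natAbs)).mono fun N hN ↦ by lia
    have hb : Tendsto (fun N : ℕ ↦ (N - n).toNat) atTop atTop :=
      tendsto_atTop.2 fun b ↦ (eventually_ge_atTop (b + n.natAbs)).mono fun N hN ↦ by lia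
    refine ((tendsto_gaussBinom_add hp ha hb).mul_const _).congr' (hlarge.mono fun N hN ↦ ?_)
    dsimp only
    rw [Set.indicator_of_mem (by rw [coe_Icc, Set.mem_Icc]; lia),
      show (N + n).toNat + (N - n).toNat = 2 * N by lia]
  · refine (norm_indicator_le_norm_self _ n).trans ?_
    rw [norm_mul]
    gcongr
    exact hC _ _

/-- The **Jacobi triple product identity**. -/
theorem tprod_mul_tprod_eq_tsum_zpow_sq_mul_zpow (hq : q ≠ 0) (hq' : ‖q‖ < 1) (hz : z ≠ 0) :
    (∏' k : ℕ, (1 - (q ^ 2) ^ (k + 1))) *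
        ∏' k : ℕ, ((1 + q ^ (2 * k + 1) * z) * (1 + q ^ (2 * k + 1) * z⁻¹)) =
      ∑' n : ℤ, q ^ n ^ 2 * z ^ n := by
  have hp := norm_sq_lt_one hq'
  have hprod := (multipliable_one_add_pow_odd_mul_mul_inv hq' z).tendsto_prod_tprod_nat
  simp only [prod_range_eq_sum_gaussBinom hq hz] at hprod
  rw [tendsto_nhds_unique hprod (tendsto_sum_gaussBinom hq hq' hz), tsum_mul_left,
    mul_inv_cancel_left₀ (tprod_one_sub_pow_succ_ne_zero hp)]

lemma tprod_one_add_pow_odd_mul_mul_inv_one_ne_zero (hq : ‖q‖ < 1) :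
    ∏' k : ℕ, ((1 + q ^ (2 * k + 1) * 1) * (1 + q ^ (2 * k + 1) * 1⁻¹)) ≠ 0 := by
  have hmul := multipliable_one_add_pow_odd_mul hq 1
  have hne : ∏' k : ℕ, (1 + q ^ (2 * k + 1) * 1) ≠ 0 := tprod_one_add_ne_zero_of_summable
    (fun k ↦ by simpa only [mul_one] using one_add_pow_odd_ne_zero hq k)
    (summable_norm_pow_odd_mul hq 1)
  rw [inv_one, hmul.tprod_mul hmul]
  exact mul_ne_zero hne hne

theorem tsum_zpow_sq_mul_zpow_div_tsum_zpow_sq (hq : q ≠ 0) (hq' : ‖q‖ < 1) (hz : z ≠ 0) :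
    (∑' n : ℤ, q ^ n ^ 2 * z ^ n) / ∑' n : ℤ, q ^ n ^ 2 =
      ∏' k : ℕ, (1 - q ^ (2 * k + 1) * (2 - (z + z⁻¹)) / (1 + q ^ (2 * k + 1)) ^ 2) := by
  have theta_one : ∑' n : ℤ, q ^ n ^ 2 = ∑' n : ℤ, q ^ n ^ 2 * (1 : 𝕜) ^ n := by
    simp only [one_zpow, mul_one]
  rw [theta_one, ← tprod_mul_tprod_eq_tsum_zpow_sq_mul_zpow hq hq' hz,
    ← tprod_mul_tprod_eq_tsum_zpow_sq_mul_zpow hq hq' one_ne_zero,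
    mul_div_mul_left _ _ (tprod_one_sub_pow_succ_ne_zero (norm_sq_lt_one hq')),
    ← (multipliable_one_add_pow_odd_mul_mul_inv hq' z).tprod_div₀
      (multipliable_one_add_pow_odd_mul_mul_inv hq' 1)
      (tprod_one_add_pow_odd_mul_mul_inv_one_ne_zero hq')]
  refine tprod_congr fun k ↦ ?_
  have hk := one_add_pow_odd_ne_zero hq' k
  rw [inv_one, mul_one]
  field_simp
  ring

end TripleProduct

section PiSeries

variable {ι : Type*} [Fintype ι] {κ : ι → Type*}

lemma subset_piFinset_image_eval [DecidableEq ι] [∀ i, DecidableEq (κ i)]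
    (s : Finset (∀ i, κ i)) : s ⊆ Fintype.piFinset fun i ↦ s.image (· i) :=
  fun _ hx ↦ Fintype.mem_piFinset.2 fun _ ↦ mem_image_of_mem _ hx

lemma summable_prod_pi_of_nonneg {f : ∀ i, κ i → ℝ} (hf : ∀ i, Summable (f i))
    (hf₀ : ∀ i a, 0 ≤ f i a) : Summable fun x : ∀ i, κ i ↦ ∏ i, f i (x i) := by
  classical
  have hnonneg (x : ∀ i, κ i) : 0 ≤ ∏ i, f i (x i) := prod_nonneg fun i _ ↦ hf₀ i _
  refine summable_of_sum_le (c := ∏ i, ∑' a, f i a) hnonneg fun s ↦ ?_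
  calc ∑ x ∈ s, ∏ i, f i (x i)
      ≤ ∑ x ∈ Fintype.piFinset fun i ↦ s.image (· i), ∏ i, f i (x i) :=
        sum_le_sum_of_subset_of_nonneg (subset_piFinset_image_eval s) fun x _ _ ↦ hnonneg x
    _ = ∏ i, ∑ a ∈ s.image (· i), f i a := (prod_univ_sum _ _).symm
    _ ≤ ∏ i, ∑' a, f i a := prod_le_prod (fun i _ ↦ sum_nonneg fun a _ ↦ hf₀ i a)
        fun i _ ↦ (hf i).sum_le_tsum _ fun a _ ↦ hf₀ i a

lemma tendsto_piFinset_atTop [DecidableEq ι] :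
    Tendsto (fun t : ∀ i, Finset (κ i) ↦ Fintype.piFinset t) atTop atTop := by
  classical
  refine tendsto_atTop.2 fun s ↦ (eventually_ge_atTop fun i ↦ s.image (· i)).mono fun t ht ↦ ?_
  exact (subset_piFinset_image_eval s).trans (Fintype.piFinset_subset _ _ ht)

lemma prod_tsum_eq_tsum_prod_pi {R : Type*} [CommSemiring R] [TopologicalSpace R] [T2Space R]
    [ContinuousMul R]
    {f : ∀ i, κ i → R} (hf : ∀ i, Summable (f i))
    (hprod : Summable fun x : ∀ i, κ i ↦ ∏ i, f i (x i)) :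
    ∏ i, ∑' a, f i a = ∑' x : ∀ i, κ i, ∏ i, f i (x i) := by
  classical
  have hbox : Tendsto (fun t : ∀ i, Finset (κ i) ↦ ∏ i, ∑ a ∈ t i, f i a) atTop
      (𝓝 (∑' x : ∀ i, κ i, ∏ i, f i (x i))) := by
    simp only [prod_univ_sum]
    exact hprod.hasSum.comp tendsto_piFinset_atTop
  refine tendsto_nhds_unique (tendsto_finsetProd _ fun i _ ↦ ?_) hbox
  refine (hf i).hasSum.comp (tendsto_atTop.2 fun s ↦ ?_)
  filter_upwards [eventually_ge_atTop (Function.update ⊥ i s)] with t ht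
  simpa using ht i

end PiSeries

section Gaussian

open scoped Real

variable {τ : ℝ}

lemma ofReal_tprod {ι : Type*} (f : ι → ℝ) : ((∏' i, f i : ℝ) : ℂ) = ∏' i, (f i : ℂ) :=
  IsClosedEmbedding.map_tprod f (g := Complex.ofRealHom)
    Complex.isUniformEmbedding_ofReal.isClosedEmbedding

lemma tsum_zpow_sq_mul_zpow_eq_tsum_exp_neg_mul_sub_sq (hτ : 0 < τ) (η : ℝ) :
    ∑' n : ℤ, (Real.exp (-π ^ 2 / τ) : ℂ) ^ n ^ 2 * Complex.exp (2 * π * η * Complex.I) ^ n =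
      1 / (π / τ : ℂ) ^ (1 / 2 : ℂ) * (∑' n : ℤ, Real.exp (-τ * (n - η) ^ 2) : ℝ) := by
  have hτ' : (τ : ℂ) ≠ 0 := mod_cast hτ.ne'
  have hpi : (π : ℂ) ≠ 0 := mod_cast Real.pi_ne_zero
  have hre : 0 < (π / τ : ℂ).re := by
    rw [← Complex.ofReal_div, Complex.ofReal_re]
    exact div_pos Real.pi_pos hτ
  convert Complex.tsum_exp_neg_quadratic hre (Complex.I * η) using 2
  · funext n
    rw [Complex.ofReal_exp, ← Complex.exp_int_mul, ← Complex.exp_int_mul, ← Complex.exp_add]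
    congr 1
    push_cast
    field_simp
  · rw [Complex.ofReal_tsum]
    refine tsum_congr fun n ↦ ?_
    push_cast
    rw [← mul_assoc, Complex.I_mul_I]
    congr 1
    field_simp
    ring

theorem tsum_exp_neg_mul_sub_sq_div_tsum_exp_neg_mul_sq {q : ℝ} (hτ : 0 < τ)
    (hq : q = Real.exp (-π ^ 2 / τ)) (η : ℝ) :
    (∑' n : ℤ, Real.exp (-τ * (n - η) ^ 2)) / ∑' n : ℤ, Real.exp (-τ * (n : ℝ) ^ 2) =
      ∏' k : ℕ, (1 - 2 * q ^ (2 * k + 1) * (1 - Real.cos (2 * π * η)) /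
        (1 + q ^ (2 * k + 1)) ^ 2) := by
  have hq₀ : (q : ℂ) ≠ 0 := by
    rw [hq]
    exact mod_cast (Real.exp_pos _).ne'
  have hq₁ : ‖(q : ℂ)‖ < 1 := by
    rw [hq, Complex.norm_real, Real.norm_of_nonneg (Real.exp_pos _).le, Real.exp_lt_one_iff]
    exact div_neg_of_neg_of_pos (neg_neg_iff_pos.2 (pow_pos Real.pi_pos 2)) hτ
  have hroot : 1 / (π / τ : ℂ) ^ (1 / 2 : ℂ) ≠ 0 := by
    refine one_div_ne_zero ?_
    rw [Complex.cpow_ne_zero_iff_of_exponent_ne_zero (by norm_num)]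
    exact div_ne_zero (mod_cast Real.pi_ne_zero) (mod_cast hτ.ne')
  have hzero := tsum_zpow_sq_mul_zpow_eq_tsum_exp_neg_mul_sub_sq hτ 0
  simp only [sub_zero, Complex.ofReal_zero, mul_zero, zero_mul, Complex.exp_zero, one_zpow,
    mul_one, ← hq] at hzero
  have htheta := tsum_zpow_sq_mul_zpow_div_tsum_zpow_sq hq₀ hq₁
    (Complex.exp_ne_zero (2 * π * η * Complex.I))
  rw [hzero, hq, tsum_zpow_sq_mul_zpow_eq_tsum_exp_neg_mul_sub_sq hτ, mul_div_mul_left _ _ hroot,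
    ← Complex.ofReal_div, ← hq] at htheta
  refine Complex.ofReal_injective (htheta.trans ?_)
  rw [ofReal_tprod]
  refine tprod_congr fun k ↦ ?_
  rw [← Complex.exp_neg, ← neg_mul, ← Complex.two_cos]
  push_cast
  ring

lemma summable_exp_neg_mul_sub_sq (hτ : 0 < τ) (η : ℝ) :
    Summable fun n : ℤ ↦ Real.exp (-τ * (n - η) ^ 2) := by
  have hexp : Real.exp (-τ) < 1 := Real.exp_lt_one_iff.2 (neg_neg_iff_pos.2 hτ)
  refine ((summable_zpow_sq_mul_zpow (Real.exp_pos (-τ)) hexp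
    (Real.exp_pos (2 * τ * η))).mul_left (Real.exp (-τ * η ^ 2))).congr fun n ↦ ?_
  rw [← Real.rpow_intCast, ← Real.rpow_intCast, ← Real.exp_mul, ← Real.exp_mul, ← Real.exp_add,
    ← Real.exp_add]
  congr 1
  push_cast
  ring

lemma tsum_exp_neg_mul_sum_sub_sq {ι : Type*} [Fintype ι] (hτ : 0 < τ) (y : ι → ℝ) :
    ∑' x : ι → ℤ, Real.exp (-τ * ∑ i, (x i - y i) ^ 2) =
      ∏ i, ∑' n : ℤ, Real.exp (-τ * (n - y i) ^ 2) := by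
  have hsum (i : ι) : Summable fun n : ℤ ↦ Real.exp (-τ * (n - y i) ^ 2) :=
    summable_exp_neg_mul_sub_sq hτ (y i)
  have hprod := summable_prod_pi_of_nonneg hsum fun _ _ ↦ (Real.exp_pos _).le
  simp only [mul_sum, Real.exp_sum]
  exact (prod_tsum_eq_tsum_prod_pi hsum hprod).symm

end Gaussian

theorem stmt_10_general {ι : Type*} [Fintype ι] {τ q : ℝ} (hτ : 0 < τ)
    (hq : q = Real.exp (-Real.pi ^ 2 / τ)) (y : ι → ℝ) :
    (∑' x : ι → ℤ, Real.exp (-τ * ∑ i, ((x i : ℝ) - y i) ^ 2)) /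
        (∑' x : ι → ℤ, Real.exp (-τ * ∑ i, (x i : ℝ) ^ 2)) =
      ∏ i, ∏' k : ℕ,
        (1 - 2 * q ^ (2 * k + 1) * (1 - Real.cos (2 * Real.pi * y i)) /
          (1 + q ^ (2 * k + 1)) ^ 2) := by
  have factor_zero := tsum_exp_neg_mul_sum_sub_sq hτ (0 : ι → ℝ)
  simp only [Pi.zero_apply, sub_zero] at factor_zero
  rw [tsum_exp_neg_mul_sum_sub_sq hτ, factor_zero, ← prod_div_distrib]
  exact prod_congr rfl fun i _ ↦ tsum_exp_neg_mul_sub_sq_div_tsum_exp_neg_mul_sq hτ hq (y i)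

/-- Let `τ > 0`, `q = e^{−π²/τ}`, and `y = (η_1, …, η_n) ∈ ℝⁿ` with `|η_i| ≤ 1/2` for all
`i`. Then
`Σ_{x ∈ ℤⁿ} e^{−τ‖x−y‖²} / Σ_{x ∈ ℤⁿ} e^{−τ‖x‖²}
  = ∏_{i=1}^n ∏_{k=1}^∞ (1 − 2q^{2k−1}(1 − cos(2πη_i))/(1 + q^{2k−1})²)`.
(The inner product is indexed below by `k : ℕ`, with `k` corresponding to `k+1` in the
statement, so the exponent `2k−1` becomes `2k+1`.) -/
theorem stmt_10 (n : ℕ) (τ : ℝ) (hτ : 0 < τ) (q : ℝ) (hq : q = Real.exp (-Real.pi ^ 2 / τ))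
    (y : Fin n → ℝ) (hy : ∀ i, |y i| ≤ 1 / 2) :
    (∑' x : Fin n → ℤ, Real.exp (-τ * ∑ i, ((x i : ℝ) - y i) ^ 2)) /
        (∑' x : Fin n → ℤ, Real.exp (-τ * ∑ i, (x i : ℝ) ^ 2)) =
      ∏ i, ∏' k : ℕ,
        (1 - 2 * q ^ (2 * k + 1) * (1 - Real.cos (2 * Real.pi * y i)) /
          (1 + q ^ (2 * k + 1)) ^ 2) :=
  stmt_10_general hτ hq y
end

section
/- Fix a real γ > 1. Let n ≥ 2 be an integer and let B be an n × n positive definite real matrix such that sI ⪯ B for some real s ≥ γ ln n. Then for every integer k ≥ 1, Σ_{x ∈ ℤ^n, ‖x‖² ≥ k} exp(−⟨Bx, x⟩) ≤ 60 n^{(1−γ)k}. -/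
open scoped Matrix

open Filter Topology

/-!
Where `k ≤ ‖x‖²` we have `γ log n ‖x‖² ≥ (γ - 1) k log n + log n ‖x‖²`, so the factor
`n ^ ((1 - γ) k)` can be pulled out of each term of the tail. Since `|j| ≤ j²` for integers `j`,
what remains is bounded by `∑ n ^ (-|x|₁)`, which factors over the coordinates into
`((1 + n⁻¹) / (1 - n⁻¹)) ^ n = (1 + 2 / (n - 1)) ^ n ≤ exp (2n / (n - 1)) ≤ exp 4 < 60`.
-/

section LatticeSums

variable {ι κ : Type*} [Fintype ι]

lemma hasSum_pi_prod_of_nonneg {f : ι → κ → ℝ} {a : ι → ℝ} (hf : ∀ i j, 0 ≤ f i j)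
    (h : ∀ i, HasSum (f i) (a i)) : HasSum (fun x : ι → κ ↦ ∏ i, f i (x i)) (∏ i, a i) := by
  classical
  have hprod (x : ι → κ) : 0 ≤ ∏ i, f i (x i) := Finset.prod_nonneg fun i _ ↦ hf i (x i)
  refine hasSum_of_isLUB_of_nonneg _ hprod ⟨?_, fun b hb ↦ ?_⟩
  · rintro _ ⟨S, rfl⟩
    let T (i : ι) : Finset κ := S.image fun x ↦ x i
    calc ∑ x ∈ S, ∏ i, f i (x i)
        ≤ ∑ x ∈ Fintype.piFinset T, ∏ i, f i (x i) :=
          Finset.sum_le_sum_of_subset_of_nonneg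
            (fun x hx ↦ Fintype.mem_piFinset.2 fun i ↦ Finset.mem_image_of_mem _ hx)
            fun x _ _ ↦ hprod x
      _ = ∏ i, ∑ j ∈ T i, f i j := (Finset.prod_univ_sum T f).symm
      _ ≤ ∏ i, a i :=
          Finset.prod_le_prod (fun i _ ↦ Finset.sum_nonneg fun j _ ↦ hf i j)
            fun i _ ↦ sum_le_hasSum _ (fun j _ ↦ hf i j) (h i)
  · have hlim : Tendsto (fun T : Finset κ ↦ ∏ i, ∑ j ∈ T, f i j) atTop (𝓝 (∏ i, a i)) :=
      tendsto_finsetProd _ fun i _ ↦ h i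
    refine le_of_tendsto' hlim fun T ↦ ?_
    rw [Finset.prod_univ_sum]
    exact hb ⟨_, rfl⟩

lemma hasSum_pow_natAbs {K : Type*} [NormedField K] {r : K} (hr : ‖r‖ < 1) :
    HasSum (fun j : ℤ ↦ r ^ j.natAbs) ((1 + r) / (1 - r)) := by
  have hgeom := hasSum_geometric_of_norm_lt_one hr
  have hneg : HasSum (fun m : ℕ ↦ r ^ (-((m : ℤ) + 1)).natAbs) (r * (1 - r)⁻¹) := by
    refine (hgeom.mul_left r).congr_fun fun m ↦ ?_
    rw [← pow_succ', Int.natAbs_neg]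
    rfl
  rw [div_eq_mul_inv, one_add_mul]
  exact HasSum.of_nat_of_neg_add_one hgeom hneg

lemma hasSum_pow_sum_natAbs {r : ℝ} (hr₀ : 0 ≤ r) (hr₁ : r < 1) :
    HasSum (fun x : ι → ℤ ↦ r ^ ∑ i, (x i).natAbs)
      (((1 + r) / (1 - r)) ^ Fintype.card ι) := by
  have hline : HasSum (fun j : ℤ ↦ r ^ j.natAbs) ((1 + r) / (1 - r)) :=
    hasSum_pow_natAbs (by rwa [Real.norm_of_nonneg hr₀])
  have hnonneg (_ : ι) (j : ℤ) : 0 ≤ r ^ j.natAbs := pow_nonneg hr₀ _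
  simpa only [Finset.prod_pow_eq_pow_sum, Finset.prod_const, Finset.card_univ] using
    hasSum_pi_prod_of_nonneg hnonneg fun _ ↦ hline

lemma exp_neg_mul_sum_sq_le_pow {t : ℝ} (ht : 0 ≤ t) (x : ι → ℤ) :
    Real.exp (-(t * ∑ i, (x i : ℝ) ^ 2)) ≤ Real.exp (-t) ^ ∑ i, (x i).natAbs := by
  have habs : ((∑ i, (x i).natAbs : ℕ) : ℝ) ≤ ∑ i, (x i : ℝ) ^ 2 := by
    rw [Nat.cast_sum]
    refine Finset.sum_le_sum fun i _ ↦ ?_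
    rw [Nat.cast_natAbs, Int.abs_eq_natAbs]
    exact_mod_cast Int.natAbs_le_self_sq (x i)
  rw [← Real.exp_nat_mul, Real.exp_le_exp, mul_neg, neg_le_neg_iff, mul_comm]
  exact mul_le_mul_of_nonneg_left habs ht

lemma summable_exp_neg_mul_sum_sq {t : ℝ} (ht : 0 < t) :
    Summable fun x : ι → ℤ ↦ Real.exp (-(t * ∑ i, (x i : ℝ) ^ 2)) :=
  (hasSum_pow_sum_natAbs (Real.exp_nonneg _) (by simpa using ht)).summable.of_nonneg_of_le
    (fun _ ↦ Real.exp_nonneg _) (exp_neg_mul_sum_sq_le_pow ht.le)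

lemma tsum_exp_neg_mul_sum_sq_le {t : ℝ} (ht : 0 < t) :
    ∑' x : ι → ℤ, Real.exp (-(t * ∑ i, (x i : ℝ) ^ 2)) ≤
      ((1 + Real.exp (-t)) / (1 - Real.exp (-t))) ^ Fintype.card ι :=
  hasSum_le (exp_neg_mul_sum_sq_le_pow ht.le) (summable_exp_neg_mul_sum_sq ht).hasSum
    (hasSum_pow_sum_natAbs (Real.exp_nonneg _) (by simpa using ht))

end LatticeSums

section Tail

lemma exp_neg_le_exp_mul_exp_neg {N R q s t : ℝ} (hts : t ≤ s) (hR : R ≤ N) (hq : s * N ≤ q) :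
    Real.exp (-q) ≤ Real.exp ((t - s) * R) * Real.exp (-(t * N)) := by
  rw [← Real.exp_add, Real.exp_le_exp]
  linarith [mul_le_mul_of_nonneg_left hR (sub_nonneg.2 hts)]

variable {ι : Type*} [Fintype ι] {Q : (ι → ℤ) → ℝ} {s t : ℝ}

lemma summable_exp_neg_of_mul_sum_sq_le (hs : 0 < s)
    (hQ : ∀ x, s * ∑ i, (x i : ℝ) ^ 2 ≤ Q x) : Summable fun x ↦ Real.exp (-Q x) :=
  (summable_exp_neg_mul_sum_sq hs).of_nonneg_of_le (fun _ ↦ Real.exp_nonneg _)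
    fun x ↦ Real.exp_le_exp.2 (neg_le_neg (hQ x))

lemma tsum_exp_neg_tail_le (ht : 0 < t) (hts : t ≤ s)
    (hQ : ∀ x, s * ∑ i, (x i : ℝ) ^ 2 ≤ Q x) (R : ℝ) :
    ∑' x : {x : ι → ℤ // R ≤ ∑ i, (x i : ℝ) ^ 2}, Real.exp (-Q x) ≤
      Real.exp ((t - s) * R) *
        ((1 + Real.exp (-t)) / (1 - Real.exp (-t))) ^ Fintype.card ι := by
  let g (x : ι → ℤ) : ℝ := Real.exp (-(t * ∑ i, (x i : ℝ) ^ 2))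
  have hg : Summable g := summable_exp_neg_mul_sum_sq ht
  calc ∑' x : {x : ι → ℤ // R ≤ ∑ i, (x i : ℝ) ^ 2}, Real.exp (-Q x)
      ≤ ∑' x : {x : ι → ℤ // R ≤ ∑ i, (x i : ℝ) ^ 2}, Real.exp ((t - s) * R) * g x :=
        ((summable_exp_neg_of_mul_sum_sq_le (ht.trans_le hts) hQ).subtype _).tsum_le_tsum
          (fun x ↦ exp_neg_le_exp_mul_exp_neg hts x.2 (hQ x)) ((hg.mul_left _).subtype _)
    _ = Real.exp ((t - s) * R) *
          ∑' x : {x : ι → ℤ // R ≤ ∑ i, (x i : ℝ) ^ 2}, g x := tsum_mul_left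
    _ ≤ Real.exp ((t - s) * R) * ∑' x, g x := by
        gcongr
        exact hg.tsum_subtype_le g _ fun _ ↦ Real.exp_nonneg _
    _ ≤ _ := by
        gcongr
        exact tsum_exp_neg_mul_sum_sq_le ht

end Tail

lemma one_add_inv_div_one_sub_inv_pow_le_exp_four {n : ℕ} (hn : 2 ≤ n) :
    ((1 + (n : ℝ)⁻¹) / (1 - (n : ℝ)⁻¹)) ^ n ≤ Real.exp 4 := by
  have hn' : (2 : ℝ) ≤ n := by exact_mod_cast hn
  have hpred : (0 : ℝ) < n - 1 := by linarith
  calc ((1 + (n : ℝ)⁻¹) / (1 - (n : ℝ)⁻¹)) ^ n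
      = (2 / (n - 1) + 1 : ℝ) ^ n := by
        congr 1
        field_simp
        ring
    _ ≤ Real.exp (2 / (n - 1)) ^ n := by
        gcongr
        exact Real.add_one_le_exp _
    _ = Real.exp (n * (2 / (n - 1))) := (Real.exp_nat_mul _ n).symm
    _ ≤ Real.exp 4 := by
        rw [Real.exp_le_exp, mul_div_assoc', div_le_iff₀ hpred]
        linarith

lemma exp_four_lt_sixty : Real.exp 4 < 60 := by
  calc Real.exp 4 = Real.exp 1 ^ 4 := by simp
    _ < 2.7182818286 ^ 4 := by
        gcongr
        exact Real.exp_one_lt_d9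
    _ < 60 := by norm_num

lemma mul_sum_sq_le_mulVec_dotProduct {ι : Type*} [Fintype ι] [DecidableEq ι]
    {B : Matrix ι ι ℝ} {s : ℝ} (hB : (B - s • (1 : Matrix ι ι ℝ)).PosSemidef) (v : ι → ℝ) :
    s * ∑ i, v i ^ 2 ≤ B.mulVec v ⬝ᵥ v := by
  have hv : v ⬝ᵥ v = ∑ i, v i ^ 2 := by simp only [dotProduct, sq]
  have h := hB.dotProduct_mulVec_nonneg v
  rw [star_trivial, Matrix.sub_mulVec, Matrix.smul_mulVec, Matrix.one_mulVec, dotProduct_sub,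
    dotProduct_smul, smul_eq_mul, hv, dotProduct_comm, sub_nonneg] at h
  exact h

theorem stmt_16_general {γ : ℝ} (hγ : 1 ≤ γ) {n : ℕ} (hn : 2 ≤ n) {Q : (Fin n → ℤ) → ℝ}
    (hQ : ∀ x, γ * Real.log n * ∑ i, (x i : ℝ) ^ 2 ≤ Q x) (R : ℝ) :
    (Summable fun x : {x : Fin n → ℤ // R ≤ ∑ i, (x i : ℝ) ^ 2} ↦ Real.exp (-Q x)) ∧
      ∑' x : {x : Fin n → ℤ // R ≤ ∑ i, (x i : ℝ) ^ 2}, Real.exp (-Q x) ≤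
        60 * (n : ℝ) ^ ((1 - γ) * R) := by
  have hn₁ : (1 : ℝ) < n := by exact_mod_cast hn
  have hn₀ : (0 : ℝ) < n := zero_lt_one.trans hn₁
  have hlog : 0 < Real.log n := Real.log_pos hn₁
  have hle : Real.log n ≤ γ * Real.log n := le_mul_of_one_le_left hlog.le hγ
  refine ⟨(summable_exp_neg_of_mul_sum_sq_le (hlog.trans_le hle) hQ).subtype _,
    (tsum_exp_neg_tail_le hlog hle hQ R).trans ?_⟩
  have hdecay : Real.exp ((Real.log n - γ * Real.log n) * R) = (n : ℝ) ^ ((1 - γ) * R) := by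
    rw [Real.rpow_def_of_pos hn₀]
    ring_nf
  rw [hdecay, Real.exp_neg, Real.exp_log hn₀, Fintype.card_fin, mul_comm]
  gcongr
  exact (one_add_inv_div_one_sub_inv_pow_le_exp_four hn).trans exp_four_lt_sixty.le

/-- Fix a real `γ > 1`. Let `n ≥ 2` and let `B` be an `n × n` positive definite real matrix
with `sI ⪯ B` for some real `s ≥ γ ln n`. Then for every integer `k ≥ 1`,
`Σ_{x ∈ ℤⁿ, ‖x‖² ≥ k} exp(−⟨Bx, x⟩) ≤ 60 n^{(1−γ)k}`. -/
theorem stmt_16 (γ : ℝ) (hγ : 1 < γ) (n : ℕ) (hn : 2 ≤ n)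
    (B : Matrix (Fin n) (Fin n) ℝ) (hB : B.PosDef) (s : ℝ)
    (hs : γ * Real.log n ≤ s) (hsB : (B - s • (1 : Matrix (Fin n) (Fin n) ℝ)).PosSemidef)
    (k : ℕ) (hk : 1 ≤ k) :
    (∑' x : {x : Fin n → ℤ // (k : ℝ) ≤ ∑ i, (x i : ℝ) ^ 2},
        Real.exp (-(B.mulVec (fun i => ((x : Fin n → ℤ) i : ℝ)) ⬝ᵥ
          (fun i => ((x : Fin n → ℤ) i : ℝ))))) ≤
      60 * (n : ℝ) ^ ((1 - γ) * k) := by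
  exact (stmt_16_general hγ.le hn (fun x ↦ (mul_le_mul_of_nonneg_right hs (by positivity)).trans
    (mul_sum_sq_le_mulVec_dotProduct hsB fun i ↦ (x i : ℝ))) k).2
end
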